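/- Let $K$ be an imaginary quadratic field of class number one with ring of integers $\mathcal{O}_K$, let $a \in \mathcal{O}_K$, let $\mathfrak{p}$ be a nonzero prime ideal of $\mathcal{O}_K$ not dividing $2$ (that is, $2 \notin \mathfrak{p}$), and let $r \ge 1$ be an integer such that the principal ideal $(a^2 - 64)$ equals $\mathfrak{p}^r$. Then $a - 8$ is a unit of $\mathcal{O}_K$ or $a + 8$ is a unit of $\mathcal{O}_K$. -/

import Mathlib

open NumberField

/-- If a prime power `𝔭 ^ r` with `𝔭` maximal is contained in the principal ideal `(x)`, then `x`
is a unit or lies in `𝔭`. -/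
theorem isUnit_or_mem_of_pow_le_span_singleton {R : Type*} [CommRing R] {𝔭 : Ideal R}
    (h𝔭 : 𝔭.IsMaximal) {r : ℕ} {x : R} (h : 𝔭 ^ r ≤ Ideal.span {x}) :
    IsUnit x ∨ x ∈ 𝔭 := by
  refine or_iff_not_imp_left.2 fun hx => ?_
  obtain ⟨M, hM, hxM⟩ := exists_max_ideal_of_mem_nonunits hx
  have hle : 𝔭 ^ r ≤ M := h.trans ((Ideal.span_singleton_le_iff_mem M).2 hxM)
  rwa [h𝔭.eq_of_le hM.ne_top (hM.isPrime.le_of_pow_le hle)]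

/-- Let `K` be an imaginary quadratic field of class number one, `a ∈ O_K`, `𝔭` a nonzero prime
ideal of `O_K` not dividing `2`, and `r ≥ 1` with `(a² - 64) = 𝔭^r`.  Then `a - 8` or `a + 8` is
a unit of `O_K`. -/
theorem factor_of_prime_power_is_unit
    (K : Type*) [Field K] [NumberField K]
    [Algebra.IsQuadraticExtension ℚ K] [NumberField.IsTotallyComplex K]
    (hcl : NumberField.classNumber K = 1)
    (a : 𝓞 K) (𝔭 : Ideal (𝓞 K)) (h𝔭 : 𝔭.IsPrime) (h𝔭0 : 𝔭 ≠ ⊥) (hodd : (2 : 𝓞 K) ∉ 𝔭)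
    (r : ℕ) (hr : 1 ≤ r)
    (ha : Ideal.span ({a ^ 2 - 64} : Set (𝓞 K)) = 𝔭 ^ r) :
    IsUnit (a - 8) ∨ IsUnit (a + 8) := by
  have hmax : 𝔭.IsMaximal := h𝔭.isMaximal h𝔭0
  have hsub : 𝔭 ^ r ≤ Ideal.span {a - 8} :=
    ha ▸ Ideal.span_singleton_le_span_singleton.2 ⟨a + 8, by ring⟩
  have hadd : 𝔭 ^ r ≤ Ideal.span {a + 8} :=
    ha ▸ Ideal.span_singleton_le_span_singleton.2 ⟨a - 8, by ring⟩
  rcases isUnit_or_mem_of_pow_le_span_singleton hmax hsub with h | hm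
  · exact Or.inl h
  rcases isUnit_or_mem_of_pow_le_span_singleton hmax hadd with h | hp
  · exact Or.inr h
  have h16 : (2 : 𝓞 K) ^ 4 ∈ 𝔭 := by
    have h := 𝔭.sub_mem hp hm
    ring_nf at h ⊢
    exact h
  exact absurd (h𝔭.mem_of_pow_mem 4 h16) hodd
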